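/- Let A be a complex unital Banach algebra and a ∈ A. Then a has an ag-Drazin inverse x such that the spectrum σ(a − a²x) is a finite set if and only if a is eg-Drazin invertible, i.e., there exists x ∈ A with ax = xa, xax = x, and a − a²x generalized Drazin invertible. -/

import Mathlib

open Filter Topology

/-- An element of a complex Banach algebra is quasinilpotent if its spectrum is `{0}`. -/
def IsQuasinilpotent {A : Type*} [NormedRing A] [NormedAlgebra ℂ A] (b : A) : Prop :=
  spectrum ℂ b = {0}

/-- `a` is generalized Drazin invertible. -/
def IsGDrazinInv {A : Type*} [NormedRing A] [NormedAlgebra ℂ A] (a : A) : Prop :=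
  ∃ x : A, a * x = x * a ∧ x * a * x = x ∧ IsQuasinilpotent (a - a ^ 2 * x)

/-- `a ∈ A^acc`: `a - λ1` is generalized Drazin invertible for all nonzero `λ`. -/
def MemAcc {A : Type*} [NormedRing A] [NormedAlgebra ℂ A] (a : A) : Prop :=
  ∀ l : ℂ, l ≠ 0 → IsGDrazinInv (a - l • (1 : A))

/-- `x` is an ag-Drazin inverse of `a`. -/
def IsAgDrazinInverseOf {A : Type*} [NormedRing A] [NormedAlgebra ℂ A] (x a : A) : Prop :=
  a * x = x * a ∧ x * a * x = x ∧ MemAcc (a - a ^ 2 * x)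

/-- `a` is ag-Drazin invertible. -/
def IsAgDrazinInv {A : Type*} [NormedRing A] [NormedAlgebra ℂ A] (a : A) : Prop :=
  ∃ x : A, IsAgDrazinInverseOf x a

/-- The generalized Drazin spectrum. -/
def gDrazinSpectrum {A : Type*} [NormedRing A] [NormedAlgebra ℂ A] (a : A) : Set ℂ :=
  {l : ℂ | ¬ IsGDrazinInv (a - l • (1 : A))}

/-- The ag-Drazin spectrum. -/
def agDrazinSpectrum {A : Type*} [NormedRing A] [NormedAlgebra ℂ A] (a : A) : Set ℂ :=
  {l : ℂ | ¬ IsAgDrazinInv (a - l • (1 : A))}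

/-!
An element `b` with finite spectrum is generalized Drazin invertible. Passing to the closed
subalgebra generated by `b`, which does not change a finite spectrum, we may assume that everything
commutes. Write `q` for the product of the factors `X - λ` over the nonzero points `λ` of the
spectrum. By spectral mapping `b * q(b)` is quasinilpotent, and `u * X + v * q = 1` for some
polynomials `u` and `v`, so `u(b) * b` is idempotent up to a quasinilpotent error. It lifts to an
idempotent by a convergent Catalan series; `b` is invertible on the range of this idempotent and
quasinilpotent on its kernel.

Conversely, a generalized Drazin inverse of `a - a ^ 2 * x` added to `x` leaves a quasinilpotent
remainder, whose spectrum is `{0}`.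
-/

section OuterInverse

variable {R : Type*} [Ring R] {a b x y : R}

/-- `x` is an outer inverse of `a` that commutes with `a`: the algebraic part common to all the
Drazin-type inverses, which differ in what they require of the remainder `a - a ^ 2 * x`. -/
structure IsCommOuterInverse (x a : R) : Prop where
  comm : a * x = x * a
  outer : x * a * x = x

namespace IsCommOuterInverse

lemma remainder_mul (h : IsCommOuterInverse x a) : (a - a ^ 2 * x) * x = 0 :=
  calc (a - a ^ 2 * x) * x = a * x - a * (a * x * x) := by noncomm_ring
    _ = 0 := by rw [h.comm, h.outer, h.comm, sub_self]

lemma mul_remainder (h : IsCommOuterInverse x a) : x * (a - a ^ 2 * x) = 0 := by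
  have hcomm : Commute a x := h.comm
  rw [← (hcomm.sub_left ((hcomm.pow_left 2).mul_left (.refl x))).eq, h.remainder_mul]

lemma mul_left_eq_zero (h : IsCommOuterInverse y b) (hb : b * x = 0) : y * x = 0 :=
  calc y * x = y * (b * y) * x := by rw [← mul_assoc, h.outer]
    _ = y * y * (b * x) := by rw [h.comm]; noncomm_ring
    _ = 0 := by rw [hb, mul_zero]

lemma mul_right_eq_zero (h : IsCommOuterInverse y b) (hb : x * b = 0) : x * y = 0 :=
  calc x * y = x * (y * b) * y := by rw [mul_assoc, h.outer]
    _ = x * b * (y * y) := by rw [← h.comm]; noncomm_ring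
    _ = 0 := by rw [hb, zero_mul]

lemma mul_eq_remainder_mul (hx : IsCommOuterInverse x a)
    (hy : IsCommOuterInverse y (a - a ^ 2 * x)) : a * y = (a - a ^ 2 * x) * y := by
  rw [sub_mul, mul_assoc, hy.mul_right_eq_zero hx.mul_remainder, mul_zero, sub_zero]

lemma mul_eq_mul_remainder (hx : IsCommOuterInverse x a)
    (hy : IsCommOuterInverse y (a - a ^ 2 * x)) : y * a = y * (a - a ^ 2 * x) := by
  have hsq : a ^ 2 * x = x * a ^ 2 := (show Commute a x from hx.comm).pow_left 2
  have hyx : y * x = 0 := hy.mul_left_eq_zero hx.remainder_mul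
  rw [mul_sub, hsq, ← mul_assoc, hyx, zero_mul, sub_zero]

lemma add_remainder (hx : IsCommOuterInverse x a) (hy : IsCommOuterInverse y (a - a ^ 2 * x)) :
    IsCommOuterInverse (x + y) a where
  comm := by
    rw [mul_add, add_mul, hx.comm, hx.mul_eq_remainder_mul hy,
      hx.mul_eq_mul_remainder hy, hy.comm]
  outer :=
    calc (x + y) * a * (x + y)
        = x * a * x + x * (a * y) + (y * a) * x + (y * a) * y := by noncomm_ring
      _ = x + x * (a - a ^ 2 * x) * y + y * ((a - a ^ 2 * x) * x)
            + y * (a - a ^ 2 * x) * y := by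
          rw [hx.outer, hx.mul_eq_remainder_mul hy, hx.mul_eq_mul_remainder hy,
            ← mul_assoc x, mul_assoc y _ x]
      _ = x + y := by
          rw [hx.mul_remainder, hx.remainder_mul, hy.outer]; simp

lemma remainder_add (hx : IsCommOuterInverse x a) (hy : IsCommOuterInverse y (a - a ^ 2 * x)) :
    a - a ^ 2 * (x + y) = (a - a ^ 2 * x) - (a - a ^ 2 * x) ^ 2 * y := by
  have hsq : a ^ 2 * y = (a - a ^ 2 * x) ^ 2 * y :=
    calc a ^ 2 * y = a * (y * (a - a ^ 2 * x)) := by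
          rw [← hy.comm, ← hx.mul_eq_remainder_mul hy, sq, mul_assoc]
      _ = (a - a ^ 2 * x) * y * (a - a ^ 2 * x) := by
          rw [← mul_assoc, hx.mul_eq_remainder_mul hy]
      _ = (a - a ^ 2 * x) ^ 2 * y := by rw [mul_assoc, ← hy.comm, ← mul_assoc, ← sq]
  rw [mul_add, hsq, sub_sub]

end IsCommOuterInverse

end OuterInverse

section CatalanSeries

variable {B : Type*} [NormedRing B] {x : B}

lemma catalan_le_four_pow (n : ℕ) : catalan n ≤ 4 ^ n :=
  calc catalan n ≤ (n + 1) * catalan n := Nat.le_mul_of_pos_left _ n.succ_pos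
    _ = n.centralBinom := succ_mul_catalan_eq_centralBinom n
    _ ≤ 4 ^ n := n.centralBinom_le_four_pow

lemma summable_norm_catalan_smul_pow (hx : Summable fun n : ℕ ↦ ‖x ^ n‖ * 4 ^ n) :
    Summable fun n : ℕ ↦ ‖catalan n • x ^ n‖ := by
  refine .of_nonneg_of_le (fun _ ↦ norm_nonneg _) (fun n ↦ ?_) hx
  calc ‖catalan n • x ^ n‖ ≤ catalan n * ‖x ^ n‖ := norm_nsmul_le
    _ ≤ 4 ^ n * ‖x ^ n‖ := by gcongr; exact_mod_cast catalan_le_four_pow n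
    _ = ‖x ^ n‖ * 4 ^ n := mul_comm _ _

lemma sum_antidiagonal_catalan_smul_pow_mul (x : B) (n : ℕ) :
    ∑ ij ∈ Finset.HasAntidiagonal.antidiagonal n,
        (catalan ij.1 • x ^ ij.1) * (catalan ij.2 • x ^ ij.2) =
      catalan (n + 1) • x ^ n := by
  rw [catalan_succ', Finset.sum_smul]
  refine Finset.sum_congr rfl fun ij hij ↦ ?_
  rw [smul_mul_smul_comm, ← pow_add, Finset.HasAntidiagonal.mem_antidiagonal.mp hij]

-- The solution is the Catalan generating function `∑ catalan n • x ^ n`.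
theorem exists_eq_one_add_mul_sq [CompleteSpace B] (hx : Summable fun n : ℕ ↦ ‖x ^ n‖ * 4 ^ n) :
    ∃ c : B, c = 1 + x * c ^ 2 := by
  have hnorm := summable_norm_catalan_smul_pow hx
  have hsq : (∑' n, catalan n • x ^ n) ^ 2 = ∑' n, catalan (n + 1) • x ^ n := by
    simp only [sq, tsum_mul_tsum_eq_tsum_sum_antidiagonal_of_summable_norm hnorm hnorm,
      sum_antidiagonal_catalan_smul_pow_mul]
  have hsummable : Summable fun n ↦ catalan (n + 1) • x ^ n := by
    simpa only [sum_antidiagonal_catalan_smul_pow_mul] using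
      (summable_norm_sum_mul_antidiagonal_of_summable_norm hnorm hnorm).of_norm
  refine ⟨∑' n, catalan n • x ^ n, ?_⟩
  rw [hsq, ← hsummable.tsum_mul_left, hnorm.of_norm.tsum_eq_zero_add]
  simp only [catalan_zero, pow_zero, one_smul, pow_succ', mul_smul_comm]

end CatalanSeries

section Banach

variable {A : Type*} [NormedRing A] [NormedAlgebra ℂ A] {a x : A}

open scoped ENNReal NNReal in
lemma summable_norm_pow_mul_pow_of_lt_inv_spectralRadius [CompleteSpace A] {r : ℝ≥0}
    (hr : r < (spectralRadius ℂ x)⁻¹) : Summable fun n : ℕ ↦ ‖x ^ n‖ * (r : ℝ) ^ n := by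
  obtain ⟨s, hrs, hs⟩ := ENNReal.lt_iff_exists_nnreal_btwn.mp hr
  have hball := (spectrum.hasFPowerSeriesOnBall_inverse_one_sub_smul ℂ x).exchange_radius
    ((spectrum.differentiableOn_inverse_one_sub_smul hs).hasFPowerSeriesOnBall
      (ENNReal.coe_pos.mp (zero_le.trans_lt hrs)))
  simpa using FormalMultilinearSeries.summable_norm_mul_pow _ (hrs.trans_le hball.r_le)

namespace IsQuasinilpotent

lemma spectrum_eq (h : IsQuasinilpotent x) : spectrum ℂ x = {0} := h

lemma nontrivial (h : IsQuasinilpotent x) : Nontrivial A := by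
  by_contra hA
  have := not_nontrivial_iff_subsingleton.mp hA
  exact Set.singleton_ne_empty 0 (h.spectrum_eq.symm.trans (spectrum.of_subsingleton x))

lemma of_spectrum_subset [CompleteSpace A] [Nontrivial A] (h : spectrum ℂ x ⊆ {0}) :
    IsQuasinilpotent x :=
  (spectrum.nonempty x).subset_singleton_iff.mp h

lemma isUnit_one_sub (h : IsQuasinilpotent x) : IsUnit (1 - x) := by
  have hone : (1 : ℂ) ∉ spectrum ℂ x := by rw [h.spectrum_eq]; simp
  simpa using spectrum.notMem_iff.mp hone

lemma summable_norm_pow_mul_pow [CompleteSpace A] (h : IsQuasinilpotent x) (r : NNReal) :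
    Summable fun n : ℕ ↦ ‖x ^ n‖ * (r : ℝ) ^ n := by
  refine summable_norm_pow_mul_pow_of_lt_inv_spectralRadius ?_
  simp [spectralRadius, h.spectrum_eq]

end IsQuasinilpotent

lemma IsGDrazinInv.nontrivial (h : IsGDrazinInv a) : Nontrivial A :=
  let ⟨_, _, _, hquasi⟩ := h
  hquasi.nontrivial

lemma MemAcc.nontrivial (h : MemAcc a) : Nontrivial A :=
  (h 1 one_ne_zero).nontrivial

lemma IsGDrazinInv.map {B : Type*} [NormedRing B] [NormedAlgebra ℂ B] [CompleteSpace B]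
    [Nontrivial B] (h : IsGDrazinInv a) (φ : A →ₐ[ℂ] B) : IsGDrazinInv (φ a) := by
  obtain ⟨y, hcomm, houter, hquasi⟩ := h
  refine ⟨φ y, by simp only [← map_mul, hcomm], by simp only [← map_mul, houter], ?_⟩
  refine .of_spectrum_subset ?_
  simpa using (AlgHom.spectrum_apply_subset φ _).trans hquasi.spectrum_eq.subset

end Banach

section Commutative

variable {B : Type*} [NormedCommRing B] [NormedAlgebra ℂ B] [CompleteSpace B] {b f x : B}

lemma IsQuasinilpotent.mul_right (h : IsQuasinilpotent x) (y : B) : IsQuasinilpotent (x * y) := by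
  have := h.nontrivial
  refine .of_spectrum_subset fun z hz ↦ ?_
  obtain ⟨χ, rfl⟩ := WeakDual.CharacterSpace.mem_spectrum_iff_exists.mp hz
  have hχ : χ x ∈ spectrum ℂ x := AlgHom.apply_mem_spectrum χ x
  rw [h.spectrum_eq, Set.mem_singleton_iff] at hχ
  rw [map_mul, hχ, zero_mul, Set.mem_singleton_iff]

/- With `n = f - f ^ 2` and `f + (1 - 2 * f) * t` as the candidate, idempotency reads
`(1 - 4 * n) * (t - t ^ 2) = -n`, and `t - t ^ 2 = s` is solved by `s` times a Catalan series. -/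
theorem exists_isIdempotentElem_add_mul (h : IsQuasinilpotent (f - f ^ 2)) :
    ∃ g, IsIdempotentElem (f + (f - f ^ 2) * g) := by
  obtain ⟨d, hd⟩ := (h.mul_right 4).isUnit_one_sub.exists_right_inv
  obtain ⟨c, hc⟩ := exists_eq_one_add_mul_sq ((h.mul_right (-d)).summable_norm_pow_mul_pow 4)
  have hroot : (f - f ^ 2) * -d * c - ((f - f ^ 2) * -d * c) ^ 2 = (f - f ^ 2) * -d := by
    linear_combination (f - f ^ 2) * -d * hc
  refine ⟨-((1 - 2 * f) * d * c), ?_⟩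
  rw [IsIdempotentElem]
  linear_combination (f - f ^ 2) * hd - (1 - 4 * (f - f ^ 2)) * hroot

theorem isGDrazinInv_of_mul_add_mul_eq_one {q u v : B} (hbezout : u * b + v * q = 1)
    (hquasi : IsQuasinilpotent (b * q)) : IsGDrazinInv b := by
  have happrox : u * b - (u * b) ^ 2 = b * q * (u * v) := by
    linear_combination (-u * b) * hbezout
  obtain ⟨g, hidem⟩ := exists_isIdempotentElem_add_mul (happrox ▸ hquasi.mul_right (u * v))
  rw [happrox, mul_assoc (b * q)] at hidem
  set m := b * q * (u * v * g) with hm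
  set e := u * b + m with he
  obtain ⟨d, hd⟩ := (hquasi.mul_right (u * v * g)).isUnit_one_sub.exists_right_inv
  have hinv : b * (d * u * e) = e := by
    linear_combination d * hidem.eq + e * hd - d * e * he
  refine ⟨d * u * e, mul_comm _ _, ?_, ?_⟩
  · rw [mul_assoc, hinv, mul_assoc _ e, hidem.eq]
  · have hremainder : b - b ^ 2 * (d * u * e) = b * q * (v - b * (u * v * g)) := by
      linear_combination -b * hinv - b * hbezout - b * he - b * hm
    rw [hremainder]
    exact hquasi.mul_right _

open Polynomial in
theorem isGDrazinInv_of_finite_spectrum_of_comm [Nontrivial B] (h : (spectrum ℂ b).Finite) :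
    IsGDrazinInv b := by
  let q : ℂ[X] := ∏ z ∈ h.toFinset.erase 0, (X - C z)
  have hcoprime : IsCoprime X q := by
    refine IsCoprime.prod_right fun z hz ↦ ?_
    simpa using isCoprime_X_sub_C_of_isUnit_sub (a := (0 : ℂ)) (b := z)
      (by simpa using Finset.ne_of_mem_erase hz)
  obtain ⟨u, v, huv⟩ := hcoprime
  refine isGDrazinInv_of_mul_add_mul_eq_one (q := aeval b q) (u := aeval b u) (v := aeval b v)
    (by simpa using congrArg (aeval b) huv) (.of_spectrum_subset ?_)
  have hvanish : ∀ z ∈ spectrum ℂ b, eval z (X * q) = 0 := fun z hz ↦ by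
    by_cases hzero : z = 0
    · simp [hzero]
    · simp [q, eval_prod, Finset.prod_eq_zero (i := z), hzero, hz]
  rw [show b * aeval b q = aeval b (X * q) by simp, spectrum.map_polynomial_aeval]
  rintro _ ⟨z, hz, rfl⟩
  exact hvanish z hz

end Commutative

section FiniteSpectrum

variable {A : Type*} [NormedRing A] [NormedAlgebra ℂ A] [CompleteSpace A] {b : A}

lemma spectrum_subalgebra_eq_of_countable {S : Subalgebra ℂ A} (hS : IsClosed (S : Set A)) (b : S)
    (h : (spectrum ℂ (b : A)).Countable) : spectrum ℂ b = spectrum ℂ (b : A) :=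
  Subalgebra.spectrum_eq_of_isPreconnected_compl S b
    (h.isConnected_compl_of_one_lt_rank (by simp)).isPreconnected

variable [Nontrivial A]

theorem isGDrazinInv_of_finite_spectrum (h : (spectrum ℂ b).Finite) : IsGDrazinInv b := by
  let S := Algebra.elemental ℂ b
  let _ : NormedCommRing S := { SubringClass.toNormedRing S with mul_comm := mul_comm }
  let c : S := ⟨b, Algebra.elemental.self_mem ℂ b⟩
  have hspec : spectrum ℂ c = spectrum ℂ b :=
    spectrum_subalgebra_eq_of_countable (Algebra.elemental.isClosed ℂ b) c h.countable
  exact (isGDrazinInv_of_finite_spectrum_of_comm (hspec ▸ h)).map S.val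

lemma memAcc_of_finite_spectrum (h : (spectrum ℂ b).Finite) : MemAcc b := fun z _ ↦ by
  refine isGDrazinInv_of_finite_spectrum ?_
  rw [← Algebra.algebraMap_eq_smul_one, ← spectrum.sub_singleton_eq]
  exact h.sub (Set.finite_singleton z)

theorem agDrazin_finite_spectrum_iff_egDrazin_general (a : A) :
    (∃ x : A, a * x = x * a ∧ x * a * x = x ∧ (spectrum ℂ (a - a ^ 2 * x)).Finite) ↔
      ∃ x : A, a * x = x * a ∧ x * a * x = x ∧ IsGDrazinInv (a - a ^ 2 * x) := by
  constructor
  · rintro ⟨x, hcomm, houter, hfinite⟩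
    exact ⟨x, hcomm, houter, isGDrazinInv_of_finite_spectrum hfinite⟩
  · rintro ⟨x, hxcomm, hxouter, y, hycomm, hyouter, hquasi⟩
    have hx : IsCommOuterInverse x a := ⟨hxcomm, hxouter⟩
    have hy : IsCommOuterInverse y (a - a ^ 2 * x) := ⟨hycomm, hyouter⟩
    refine ⟨x + y, (hx.add_remainder hy).comm, (hx.add_remainder hy).outer, ?_⟩
    rw [hx.remainder_add hy, hquasi.spectrum_eq]
    exact Set.finite_singleton 0

end FiniteSpectrum

theorem agDrazin_finite_spectrum_iff_egDrazin {A : Type*} [NormedRing A] [NormedAlgebra ℂ A]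
    [CompleteSpace A] (a : A) :
    (∃ x : A, IsAgDrazinInverseOf x a ∧ (spectrum ℂ (a - a ^ 2 * x)).Finite) ↔
      ∃ x : A, a * x = x * a ∧ x * a * x = x ∧ IsGDrazinInv (a - a ^ 2 * x) := by
  constructor
  · rintro ⟨x, ⟨hcomm, houter, hacc⟩, hfinite⟩
    have := hacc.nontrivial
    exact (agDrazin_finite_spectrum_iff_egDrazin_general a).mp ⟨x, hcomm, houter, hfinite⟩
  · rintro ⟨x, hcomm, houter, hdrazin⟩
    have := hdrazin.nontrivial
    obtain ⟨y, hcomm, houter, hfinite⟩ :=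
      (agDrazin_finite_spectrum_iff_egDrazin_general a).mpr ⟨x, hcomm, houter, hdrazin⟩
    exact ⟨y, ⟨hcomm, houter, memAcc_of_finite_spectrum hfinite⟩, hfinite⟩
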